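/- Let Σ ∈ ℂ^{n×n} be Hermitian positive definite, let d ≥ K, and let G : ℝ → ℂ^{n×K} and H : ℝ → ℂ^{n×n} be continuous matrix-valued functions on [0, 2π] such that H(ω) is invertible for every ω ∈ [0, 2π]. Let W ∈ ℂ^{d×n} be such that W H(ω) Σ H(ω)^H W^H is invertible for every ω ∈ [0, 2π]. Then (1/(2πK)) ∫₀^{2π} log det(I_d + W H(ω) G(ω) G(ω)^H H(ω)^H W^H (W H(ω) Σ H(ω)^H W^H)^{-1}) dω ≤ (1/(2πK)) ∫₀^{2π} log det(I_K + G(ω)^H Σ^{-1} G(ω)) dω, where both integrands are real-valued (the determinants are positive real numbers). -/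

import Mathlib

open Matrix Real
open scoped ComplexOrder

lemma one_le_det_one_add {m : ℕ} {M : Matrix (Fin m) (Fin m) ℂ} (hM : M.PosSemidef) :
    (1 : ℂ) ≤ (1 + M).det := by
  have h1 : (1 + M).det = ∏ i, (1 + (hM.1.eigenvalues i : ℂ)) := by
    have h2 : (1 + M) = -(Matrix.scalar (Fin m) (-1 : ℂ) - M) := by
      rw [map_neg, map_one]; abel
    rw [h2, Matrix.det_neg, ← Matrix.eval_charpoly, hM.1.charpoly_eq, Polynomial.eval_prod]
    rw [← Finset.card_univ, ← Finset.prod_const, ← Finset.prod_mul_distrib]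
    refine Finset.prod_congr rfl fun i _ => ?_
    simp
    ring
  rw [h1]
  have h3 : (1 : ℝ) ≤ ∏ i, (1 + hM.1.eigenvalues i) := by
    have := Finset.prod_le_prod (s := Finset.univ) (f := fun _ : Fin m => (1 : ℝ))
      (g := fun i => 1 + hM.1.eigenvalues i) (fun _ _ => zero_le_one)
      (fun i _ => by linarith [hM.eigenvalues_nonneg i])
    simpa using this
  exact_mod_cast h3

open scoped MatrixOrder in
lemma det_le_det_add {m : ℕ} {X Y : Matrix (Fin m) (Fin m) ℂ} (hX : X.PosDef)
    (hY : Y.PosSemidef) : X.det ≤ (X + Y).det := by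
  obtain ⟨C, hC⟩ : ∃ C : Matrix (Fin m) (Fin m) ℂ, Y = Cᴴ * C := by
    obtain ⟨C, hC⟩ := CStarAlgebra.nonneg_iff_eq_star_mul_self.mp hY.nonneg
    exact ⟨C, hC⟩
  rw [hC]
  have hu : IsUnit X.det := (Matrix.isUnit_iff_isUnit_det _).mp hX.isUnit
  rw [Matrix.det_add_mul Cᴴ C hu]
  have h := one_le_det_one_add (hX.inv.posSemidef.mul_mul_conjTranspose_same C)
  calc X.det = X.det * 1 := (mul_one _).symm
    _ ≤ _ := mul_le_mul_of_nonneg_left h hX.det_pos.le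

lemma schur_psd {n d : ℕ} {S : Matrix (Fin n) (Fin n) ℂ} (hS : S.PosDef)
    (A : Matrix (Fin d) (Fin n) ℂ) (hP : IsUnit (A * S * Aᴴ)) :
    (S⁻¹ - Aᴴ * (A * S * Aᴴ)⁻¹ * A).PosSemidef := by
  have hSu : IsUnit S.det := (Matrix.isUnit_iff_isUnit_det _).mp hS.isUnit
  have hPu : IsUnit (A * S * Aᴴ).det := (Matrix.isUnit_iff_isUnit_det _).mp hP
  have hPh : (A * S * Aᴴ).IsHermitian := (hS.posSemidef.mul_mul_conjTranspose_same A).1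
  have e1 : (S⁻¹)ᴴ = S⁻¹ := hS.1.inv
  have e2 : ((A * S * Aᴴ)⁻¹)ᴴ = (A * S * Aᴴ)⁻¹ := hPh.inv
  have key := hS.posSemidef.mul_mul_conjTranspose_same (S⁻¹ - Aᴴ * (A * S * Aᴴ)⁻¹ * A)
  convert key using 1
  have e3 : (A * S * Aᴴ)⁻¹ * (A * S * Aᴴ) = 1 := Matrix.nonsing_inv_mul _ hPu
  generalize hPi : (A * S * Aᴴ)⁻¹ = Pi at *
  have t1 : S⁻¹ * S = 1 := Matrix.nonsing_inv_mul _ hSu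
  have t2 : S * S⁻¹ = 1 := Matrix.mul_nonsing_inv _ hSu
  have t3 : Aᴴ * Pi * A * S * S⁻¹ = Aᴴ * Pi * A := by
    rw [Matrix.mul_assoc, t2, Matrix.mul_one]
  have t4 : Aᴴ * Pi * A * S * (Aᴴ * Pi * A) = Aᴴ * Pi * A := by
    calc _ = Aᴴ * (Pi * (A * S * Aᴴ)) * Pi * A := by simp only [Matrix.mul_assoc]
      _ = _ := by rw [e3, Matrix.mul_one]
  have t5 : (S⁻¹ - Aᴴ * Pi * A)ᴴ = S⁻¹ - Aᴴ * Pi * A := by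
    simp only [Matrix.conjTranspose_sub, Matrix.conjTranspose_mul,
      Matrix.conjTranspose_conjTranspose, e1, e2, Matrix.mul_assoc]
  rw [t5, Matrix.sub_mul, t1, Matrix.sub_mul, Matrix.one_mul, Matrix.mul_sub, t3, t4, sub_self,
    sub_zero]

lemma pointwise {n K d : ℕ} {S : Matrix (Fin n) (Fin n) ℂ} (hS : S.PosDef)
    (G : Matrix (Fin n) (Fin K) ℂ) (H : Matrix (Fin n) (Fin n) ℂ)
    (W : Matrix (Fin d) (Fin n) ℂ) (hP : IsUnit (W * H * S * Hᴴ * Wᴴ)) :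
    1 ≤ (1 + W * H * G * Gᴴ * Hᴴ * Wᴴ * (W * H * S * Hᴴ * Wᴴ)⁻¹).det ∧
    (1 + W * H * G * Gᴴ * Hᴴ * Wᴴ * (W * H * S * Hᴴ * Wᴴ)⁻¹).det ≤ (1 + Gᴴ * S⁻¹ * G).det := by
  obtain ⟨A, hA⟩ : ∃ A, A = W * H := ⟨_, rfl⟩
  have a1 : W * H * S * Hᴴ * Wᴴ = A * S * Aᴴ := by
    rw [hA, Matrix.conjTranspose_mul]; simp only [Matrix.mul_assoc]
  have a2 : W * H * G * Gᴴ * Hᴴ * Wᴴ * (A * S * Aᴴ)⁻¹ = (A * G) * (Gᴴ * Aᴴ * (A * S * Aᴴ)⁻¹) := by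
    rw [hA, Matrix.conjTranspose_mul]; simp only [Matrix.mul_assoc]
  rw [a1] at hP ⊢
  rw [a2, Matrix.det_one_add_mul_comm]
  have hPp : (A * S * Aᴴ).PosSemidef := hS.posSemidef.mul_mul_conjTranspose_same A
  have hQ : (Gᴴ * Aᴴ * (A * S * Aᴴ)⁻¹ * (A * G)).PosSemidef := by
    have := hPp.inv.conjTranspose_mul_mul_same (A * G)
    rwa [Matrix.conjTranspose_mul] at this
  refine ⟨one_le_det_one_add hQ, ?_⟩
  have h := det_le_det_add (Matrix.PosDef.one.add_posSemidef hQ)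
    ((schur_psd hS A hP).conjTranspose_mul_mul_same G)
  refine h.trans_eq ?_
  congr 1
  rw [Matrix.mul_sub, Matrix.sub_mul]
  simp only [Matrix.mul_assoc]
  abel

/-- Proposition 1 of the paper in the regime `d ≥ K`: for noise covariance `Σ ≻ 0`,
continuous channel response `G(ω) ∈ ℂ^{n×K}` and invertible metasurface response
`H(ω) ∈ ℂ^{n×n}` on `[0, 2π]`, and a fixed weights matrix `W ∈ ℂ^{d×n}` with
`W H(ω) Σ H(ω)ᴴ Wᴴ` invertible for all `ω`, both determinant integrands are positive
real numbers and the achievable average sum-rate is bounded by the fundamental limit: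
`(1/(2πK)) ∫₀^{2π} log det(I_d + W H G Gᴴ Hᴴ Wᴴ (W H Σ Hᴴ Wᴴ)⁻¹) dω ≤
 (1/(2πK)) ∫₀^{2π} log det(I_K + Gᴴ Σ⁻¹ G) dω`. -/
theorem stmt_16 (n K d : ℕ) (hdK : K ≤ d)
    (S : Matrix (Fin n) (Fin n) ℂ) (hS : S.PosDef)
    (G : ℝ → Matrix (Fin n) (Fin K) ℂ) (H : ℝ → Matrix (Fin n) (Fin n) ℂ)
    (hGcont : ContinuousOn G (Set.Icc 0 (2 * π)))
    (hHcont : ContinuousOn H (Set.Icc 0 (2 * π)))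
    (hHinv : ∀ ω ∈ Set.Icc (0 : ℝ) (2 * π), IsUnit (H ω))
    (W : Matrix (Fin d) (Fin n) ℂ)
    (hWinv : ∀ ω ∈ Set.Icc (0 : ℝ) (2 * π), IsUnit (W * H ω * S * (H ω)ᴴ * Wᴴ)) :
    (∀ ω ∈ Set.Icc (0 : ℝ) (2 * π),
      ((0 < (1 + W * H ω * G ω * (G ω)ᴴ * (H ω)ᴴ * Wᴴ *
          (W * H ω * S * (H ω)ᴴ * Wᴴ)⁻¹).det.re ∧
        (1 + W * H ω * G ω * (G ω)ᴴ * (H ω)ᴴ * Wᴴ *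
          (W * H ω * S * (H ω)ᴴ * Wᴴ)⁻¹).det.im = 0)) ∧
      (0 < (1 + (G ω)ᴴ * S⁻¹ * G ω).det.re ∧ (1 + (G ω)ᴴ * S⁻¹ * G ω).det.im = 0)) ∧
    (1 / (2 * π * K)) * ∫ ω in (0:ℝ)..(2 * π),
        Real.log ((1 + W * H ω * G ω * (G ω)ᴴ * (H ω)ᴴ * Wᴴ *
          (W * H ω * S * (H ω)ᴴ * Wᴴ)⁻¹).det.re) ≤
      (1 / (2 * π * K)) * ∫ ω in (0:ℝ)..(2 * π),
        Real.log ((1 + (G ω)ᴴ * S⁻¹ * G ω).det.re) := by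
  have hpi : (0 : ℝ) ≤ 2 * π := by positivity
  have hp := fun ω hω => pointwise hS (G ω) (H ω) W (hWinv ω hω)
  have hre : ∀ z : ℂ, 1 ≤ z → 0 < z.re ∧ z.im = 0 := by
    intro z hz
    obtain ⟨h1, h2⟩ := Complex.le_def.mp hz
    simp at h1 h2
    exact ⟨by linarith, h2.symm⟩
  refine ⟨fun ω hω => ⟨hre _ (hp ω hω).1, hre _ ((hp ω hω).1.trans (hp ω hω).2)⟩, ?_⟩
  refine mul_le_mul_of_nonneg_left ?_ (by positivity)
  have hcont : ContinuousOn (fun ω => Real.log ((1 + (G ω)ᴴ * S⁻¹ * G ω).det.re))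
      (Set.Icc 0 (2 * π)) := by
    refine ContinuousOn.log ?_ fun ω hω =>
      (hre _ ((hp ω hω).1.trans (hp ω hω).2)).1.ne'
    have hc : Continuous fun M : Matrix (Fin n) (Fin K) ℂ => (1 + Mᴴ * S⁻¹ * M).det.re := by
      fun_prop
    exact hc.comp_continuousOn hGcont
  rw [intervalIntegral.integral_of_le hpi, intervalIntegral.integral_of_le hpi]
  refine MeasureTheory.integral_mono_of_nonneg ?_
    ((hcont.integrableOn_Icc).mono_set Set.Ioc_subset_Icc_self) ?_
  · refine (MeasureTheory.ae_restrict_iff' measurableSet_Ioc).mpr (.of_forall fun ω hω => ?_)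
    have h := (Complex.le_def.mp (hp ω (Set.Ioc_subset_Icc_self hω)).1).1
    exact Real.log_nonneg (by simpa using h)
  · refine (MeasureTheory.ae_restrict_iff' measurableSet_Ioc).mpr (.of_forall fun ω hω => ?_)
    have h := hp ω (Set.Ioc_subset_Icc_self hω)
    exact Real.log_le_log (hre _ h.1).1 (Complex.le_def.mp h.2).1
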